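/- Let K be a field of characteristic zero equipped with a derivation δ : K → K, let t ∈ K with δ(t) = 1, and let v₁, v₂, v₃ ∈ K be constants (δ(vᵢ) = 0) with v₁ + v₂ + v₃ = 0. Set α = 3v₃ + 1 and β = −2(v₂ − v₁)². Suppose q ∈ K with q ≠ 0 satisfies the fourth Painlevé equation δ(δ(q)) = (δ(q))²/(2q) + (3/2)·q³ + 4t·q² + 2(t² − α)·q + β/q, and define p = (δ(q) + q² + 2tq − 2(v₁ − v₂))/(2q). Then δ(q) = 2pq − q² − 2tq + 2(v₁ − v₂) and δ(p) = 2pq − p² + 2tp + 2(v₁ − v₃); that is, (q,p) is a solution of the system S_IV(v₁,v₂,v₃), so the solutions of P_IV(α,β) are precisely the q-components of solutions of S_IV(v₁,v₂,v₃). -/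

import Mathlib

/-!
Write `a = v₁ - v₂` and `b = v₁ - v₃`; since `v₁ + v₂ + v₃ = 0`, we have `3v₃ + 1 = a - 2b + 1`.
The first equation of `S_IV` is a Riccati equation in `q` whose coefficients are affine in `p`; for
`q ≠ 0` it can be solved for `p`. Differentiating it shows that the residual of `P_IV` multiplied by
`2q` equals `(2q)²` times the residual of the second equation of `S_IV`, so that one residual
vanishes if and only if the other does.
-/

section PainleveIV

variable {k : Type*} [CommSemiring k]

section CommRing

variable {R : Type*} [CommRing R] [Algebra k R] (D : Derivation k R R)

/-- `(q, p)` solves the system `S_IV(v₁, v₂, v₃)` with respect to the derivation `D` and the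
independent variable `t`. The normalization `v₁ + v₂ + v₃ = 0` is not part of the definition. -/
def IsSIVSolution (t v₁ v₂ v₃ q p : R) : Prop :=
  D q = 2 * p * q - q ^ 2 - 2 * t * q + 2 * (v₁ - v₂) ∧
    D p = 2 * p * q - p ^ 2 + 2 * t * p + 2 * (v₁ - v₃)

variable {D} {t a q p : R}

theorem deriv_deriv_of_riccati (ht : D t = 1) (ha : D a = 0)
    (hq : D q = 2 * p * q - q ^ 2 - 2 * t * q + 2 * a) :
    D (D q) = 2 * q * D p + 2 * (p - q - t) * D q - 2 * q := by
  have hD2 : D 2 = 0 := D.map_natCast 2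
  calc D (D q) = D (2 * p * q - q ^ 2 - 2 * t * q + 2 * a) := congrArg D hq
    _ = 2 * q * D p + 2 * (p - q - t) * D q - 2 * q := by
      simp only [map_add, map_sub, D.leibniz, sq, hD2, ht, ha, smul_eq_mul]
      ring

theorem two_mul_deriv_deriv_sub_eq_of_riccati (ht : D t = 1) (ha : D a = 0)
    (hq : D q = 2 * p * q - q ^ 2 - 2 * t * q + 2 * a) (b : R) :
    2 * q * D (D q) - ((D q) ^ 2 + 3 * q ^ 4 + 8 * t * q ^ 3
        + 4 * (t ^ 2 - (a - 2 * b + 1)) * q ^ 2 + 2 * (-2 * a ^ 2))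
      = (2 * q) ^ 2 * (D p - (2 * p * q - p ^ 2 + 2 * t * p + 2 * b)) := by
  rw [deriv_deriv_of_riccati ht ha hq, hq]
  ring

end CommRing

section Field

variable {K : Type*} [Field K] [Algebra k K]

/-- `y` solves the fourth Painlevé equation `P_IV(α, β)` with respect to the derivation `D` and the
independent variable `t`. Solutions are meant to be nonzero: at `y = 0` the quotients take the junk
value `0`. -/
def IsPIVSolution (D : Derivation k K K) (t α β y : K) : Prop :=
  D (D y) = (D y) ^ 2 / (2 * y) + (3 / 2 : K) * y ^ 3 + 4 * t * y ^ 2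
    + 2 * (t ^ 2 - α) * y + β / y

variable [NeZero (2 : K)] {D : Derivation k K K} {t q p : K}

theorem isPIVSolution_iff_two_mul_deriv_deriv_eq (hq : q ≠ 0) (α β : K) :
    IsPIVSolution D t α β q ↔
      2 * q * D (D q) = (D q) ^ 2 + 3 * q ^ 4 + 8 * t * q ^ 3
        + 4 * (t ^ 2 - α) * q ^ 2 + 2 * β := by
  have h2 : (2 : K) ≠ 0 := two_ne_zero
  have hclear : 2 * q * ((D q) ^ 2 / (2 * q) + (3 / 2 : K) * q ^ 3 + 4 * t * q ^ 2
      + 2 * (t ^ 2 - α) * q + β / q) = (D q) ^ 2 + 3 * q ^ 4 + 8 * t * q ^ 3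
        + 4 * (t ^ 2 - α) * q ^ 2 + 2 * β := by
    field_simp
    ring
  rw [IsPIVSolution, ← hclear]
  exact (mul_right_inj' (mul_ne_zero h2 hq)).symm

theorem eq_div_two_mul_iff_riccati (hq : q ≠ 0) (a d : K) :
    p = (d + q ^ 2 + 2 * t * q - 2 * a) / (2 * q) ↔
      d = 2 * p * q - q ^ 2 - 2 * t * q + 2 * a := by
  rw [eq_div_iff (mul_ne_zero two_ne_zero hq)]
  constructor <;> intro h <;> linear_combination -h

theorem isPIVSolution_iff_deriv_eq_of_riccati {a : K} (ht : D t = 1) (ha : D a = 0)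
    (hq0 : q ≠ 0) (hq : D q = 2 * p * q - q ^ 2 - 2 * t * q + 2 * a) (b : K) :
    IsPIVSolution D t (a - 2 * b + 1) (-2 * a ^ 2) q ↔
      D p = 2 * p * q - p ^ 2 + 2 * t * p + 2 * b := by
  have hsq : (2 * q) ^ 2 ≠ 0 := pow_ne_zero 2 (mul_ne_zero two_ne_zero hq0)
  rw [isPIVSolution_iff_two_mul_deriv_deriv_eq hq0, ← sub_eq_zero,
    two_mul_deriv_deriv_sub_eq_of_riccati ht ha hq b, mul_eq_zero_iff_left hsq, sub_eq_zero]

theorem PIV_implies_SIV_general {v₁ v₂ v₃ : K} (ht : D t = 1) (hv : D v₁ = D v₂)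
    (hsum : v₁ + v₂ + v₃ = 0) (hq : q ≠ 0) :
    IsSIVSolution D t v₁ v₂ v₃ q p ↔
      IsPIVSolution D t (3 * v₃ + 1) (-2 * (v₂ - v₁) ^ 2) q ∧
        p = (D q + q ^ 2 + 2 * t * q - 2 * (v₁ - v₂)) / (2 * q) := by
  have ha : D (v₁ - v₂) = 0 := by rw [map_sub, hv, sub_self]
  have hα : 3 * v₃ + 1 = (v₁ - v₂) - 2 * (v₁ - v₃) + 1 := by linear_combination hsum
  rw [IsSIVSolution, hα, sub_sq_comm v₂ v₁, eq_div_two_mul_iff_riccati hq, and_comm]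
  exact and_congr_left fun hriccati =>
    (isPIVSolution_iff_deriv_eq_of_riccati ht ha hq hriccati _).symm

end Field

end PainleveIV

/-- The derivation given by an additive map on a commutative ring that satisfies the Leibniz rule.
Taking `ℤ` as base ring imposes no linearity beyond additivity. -/
def derivationOfLeibniz {R : Type*} [CommRing R] (δ : R → R)
    (hadd : ∀ a b : R, δ (a + b) = δ a + δ b)
    (hleib : ∀ a b : R, δ (a * b) = a * δ b + δ a * b) : Derivation ℤ R R :=
  .mk' (AddMonoidHom.mk' δ hadd).toIntLinearMap fun a b =>
    (hleib a b).trans (congrArg (a * δ b + ·) (mul_comm (δ a) b))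

/-- If `q` solves the fourth Painlevé equation `P_IV(α, β)` with `α = 3v₃ + 1`
and `β = −2(v₂ − v₁)²`, then setting
`p = (δ q + q² + 2tq − 2(v₁ − v₂))/(2q)`, the pair `(q, p)` solves the system
`S_IV(v₁,v₂,v₃)`. -/
theorem PIV_implies_SIV
    {K : Type*} [Field K] [CharZero K] (δ : K → K)
    (hadd : ∀ a b : K, δ (a + b) = δ a + δ b)
    (hleib : ∀ a b : K, δ (a * b) = a * δ b + δ a * b)
    (t : K) (ht : δ t = 1)
    (v₁ v₂ v₃ : K) (hv₁ : δ v₁ = 0) (hv₂ : δ v₂ = 0) (hv₃ : δ v₃ = 0)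
    (hsum : v₁ + v₂ + v₃ = 0)
    (q : K) (hq0 : q ≠ 0)
    (hPIV : δ (δ q) = (δ q) ^ 2 / (2 * q) + (3 / 2 : K) * q ^ 3 + 4 * t * q ^ 2
      + 2 * (t ^ 2 - (3 * v₃ + 1)) * q + (-2 * (v₂ - v₁) ^ 2) / q) :
    δ q = 2 * ((δ q + q ^ 2 + 2 * t * q - 2 * (v₁ - v₂)) / (2 * q)) * q
        - q ^ 2 - 2 * t * q + 2 * (v₁ - v₂) ∧
    δ ((δ q + q ^ 2 + 2 * t * q - 2 * (v₁ - v₂)) / (2 * q))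
      = 2 * ((δ q + q ^ 2 + 2 * t * q - 2 * (v₁ - v₂)) / (2 * q)) * q
        - ((δ q + q ^ 2 + 2 * t * q - 2 * (v₁ - v₂)) / (2 * q)) ^ 2
        + 2 * t * ((δ q + q ^ 2 + 2 * t * q - 2 * (v₁ - v₂)) / (2 * q))
        + 2 * (v₁ - v₃) := by
  exact (PIV_implies_SIV_general (D := derivationOfLeibniz δ hadd hleib)
    ht (hv₁.trans hv₂.symm) hsum hq0).2 ⟨hPIV, rfl⟩
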